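/- Let A be a finite alphabet with at least two letters, totally ordered with smallest letter a = min(A). An A-strict episturmian word t is an infinite Lyndon word if and only if t = a s, where s is an aperiodic A-strict epistandard word. Moreover, if Δ = x1 x2 x3 ⋯ is the L-spinned directive word of s, then t = a s is the unique episturmian word with the same set of factors as s that is directed by the spinned version of Δ in which every letter has spin R except the occurrences of the letter a, which have spin L. -/

import Mathlib

/-!
Let `σ_c` be `L_a` for `c = a` and `R_c` for `c ≠ a`. The proof rests on the sequences
(`Chain a Δ`) of infinite words starting with `a` in which each word is the image of the next
one under `σ_c`, where `c` runs through the directive word `Δ`.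

If `Δ` contains infinitely many letters `a` and infinitely many others, such a sequence is unique
(`Chain.unique`), since prefixes grow at each letter `c ≠ a` by `σ_c(a) = ac`; for the same
reason its terms are recurrent (`Chain.recurrent`). It exists: if `s` and `s'` are the
epistandard words directed by `Δ` and by its shift, Justin's formula `Pal(c v) = L_c(Pal(v)) c`
(`Pal_cons`) gives `s = L_c(s')`, and then `a s = σ_c(a s')` because `c R_c(u) = L_c(u) c`
(`StepAt.cons`). So the chain consists of the words `a s⁽ⁿ⁾` (`chain_stdWord`).

The words of a chain are Lyndon (`Chain.infLyndon`). Every `L_c` and `R_c` preserves the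
lexicographic order, and a suffix of `σ_c(w)` starting with `a` is the image of a suffix of `w`,
starting no further to the right, and strictly further to the left if `c ≠ a`. A suffix not
larger than the whole word thus leads to an infinite descent of positions.

Conversely, let `t` be Lyndon and directed by a spinned version of `Δ`. The order being
preserved, all the words of its directing sequence are Lyndon (`StepAt.infLyndon`), and an image
under `L_b` with `b ≠ a` or under `R_a` cannot be Lyndon (`StepAt.spin_of_infLyndon`). So the
sequence is a chain, and `t = a s` by uniqueness. Finally, `s` is aperiodic since a recurrent
Lyndon word is.
-/


namespace EpiQP

/-- `u` is a prefix of the infinite word `w`. -/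
def IsPref {σ : Type*} (u : List σ) (w : ℕ → σ) : Prop :=
  ∀ (i : ℕ) (h : i < u.length), u.get ⟨i, h⟩ = w i

/-- The prefix of length `n` of the infinite word `w`. -/
def prefWord {σ : Type*} (w : ℕ → σ) (n : ℕ) : List σ :=
  List.ofFn (fun i : Fin n => w i)

/-- The finite word `u` occurs in the infinite word `w` at position `k`. -/
def OccursAt {σ : Type*} (u : List σ) (w : ℕ → σ) (k : ℕ) : Prop :=
  ∀ (i : ℕ) (h : i < u.length), u.get ⟨i, h⟩ = w (k + i)

/-- `u` is a (finite) factor of the infinite word `w`. -/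
def IsFactorInf {σ : Type*} (u : List σ) (w : ℕ → σ) : Prop :=
  ∃ k, OccursAt u w k

/-- An infinite word is recurrent if each of its factors occurs infinitely often in it. -/
def Recurrent {σ : Type*} (w : ℕ → σ) : Prop :=
  ∀ (u : List σ) (k : ℕ), OccursAt u w k → ∀ N, ∃ m, N ≤ m ∧ OccursAt u w m

/-- `u` is a quasiperiod of the infinite word `w`: `u` is non-empty and there is a
sequence of prefixes `p n ++ u` of `w` with `p 0 = ε` and
`|p n| < |p (n+1)| ≤ |p n ++ u|`. -/
def IsQuasiperiod {A : Type*} (u : List A) (w : ℕ → A) : Prop :=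
  u ≠ [] ∧ ∃ p : ℕ → List A, p 0 = [] ∧
    (∀ n, (p n).length < (p (n + 1)).length ∧
      (p (n + 1)).length ≤ (p n).length + u.length) ∧
    ∀ n, IsPref (p n ++ u) w

/-- An infinite word is quasiperiodic if it has a quasiperiod. -/
def Quasiperiodic {A : Type*} (w : ℕ → A) : Prop := ∃ u, IsQuasiperiod u w

/-- A set `X` of finite words covers the infinite word `w`. -/
def CoveredBy {A : Type*} (X : Set (List A)) (w : ℕ → A) : Prop :=
  ∃ (p z : ℕ → List A), p 0 = [] ∧ (∀ n, z n ∈ X) ∧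
    (∀ n, (p n).length < (p (n + 1)).length ∧
      (p (n + 1)).length ≤ (p n).length + (z n).length) ∧
    ∀ n, IsPref (p n ++ z n) w

/-- The morphism `L_a` : `a ↦ a`, `b ↦ ab` for `b ≠ a`. -/
def Lm {A : Type*} [DecidableEq A] (a : A) (u : List A) : List A :=
  u.flatMap (fun b => if b = a then [a] else [a, b])

/-- The morphism `R_a` : `a ↦ a`, `b ↦ ba` for `b ≠ a`. -/
def Rm {A : Type*} [DecidableEq A] (a : A) (u : List A) : List A :=
  u.flatMap (fun b => if b = a then [a] else [b, a])

/-- The pure epistandard morphism `μ_v = L_{v_1} ∘ ⋯ ∘ L_{v_k}` for `v = v_1 ⋯ v_k`. -/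
def muL {A : Type*} [DecidableEq A] (v : List A) (u : List A) : List A :=
  v.foldr Lm u

/-- The pure episturmian morphism `μ_{v̄} = R_{v_1} ∘ ⋯ ∘ R_{v_k}` for `v = v_1 ⋯ v_k`. -/
def muR {A : Type*} [DecidableEq A] (v : List A) (u : List A) : List A :=
  v.foldr Rm u

/-- Spinned letters are elements of `A × Bool`: `(a, false)` is the `L`-spinned letter `a`
and `(a, true)` is the `R`-spinned letter `ā`.  `μ` on a spinned letter. -/
def muS {A : Type*} [DecidableEq A] (x : A × Bool) : List A → List A :=
  if x.2 then Rm x.1 else Lm x.1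

/-- The pure episturmian morphism `μ_{w̆}` directed by the finite spinned word `w̆`. -/
def muW {A : Type*} [DecidableEq A] (w : List (A × Bool)) (u : List A) : List A :=
  w.foldr muS u

/-- `x` is the image of the infinite word `w` under the (letterwise) morphism whose
image on the letter `a` is `f a` (all images being non-empty). -/
def SubstOf {A : Type*} (f : A → List A) (w x : ℕ → A) : Prop :=
  ∀ n, IsPref ((prefWord w n).flatMap f) x

/-- The spinned infinite word `Δ` directs the infinite word `t`: there is a sequence
`ts` of recurrent infinite words with `ts 0 = t` and `ts n = μ_{Δ n}(ts (n+1))`. -/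
def Directs {A : Type*} [DecidableEq A] (Δ : ℕ → A × Bool) (t : ℕ → A) : Prop :=
  ∃ ts : ℕ → (ℕ → A), ts 0 = t ∧ (∀ n, Recurrent (ts n)) ∧
    ∀ n, SubstOf (fun a => muS (Δ n) [a]) (ts (n + 1)) (ts n)

/-- An infinite word is episturmian iff it is directed by some spinned infinite word. -/
def Episturmian {A : Type*} [DecidableEq A] (t : ℕ → A) : Prop :=
  ∃ Δ : ℕ → A × Bool, Directs Δ t

/-- The palindromic right-closure `w⁽⁺⁾`: the shortest palindrome having `w` as a
prefix, obtained by appending the reverse of `w` deprived of its longest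
palindromic suffix. -/
def palClosure {A : Type*} [DecidableEq A] (w : List A) : List A :=
  w ++ (w.take (w.length -
    Nat.findGreatest
      (fun k => (w.drop (w.length - k)).reverse = w.drop (w.length - k)) w.length)).reverse

/-- Iterated palindromic closure: `Pal ε = ε`, `Pal (w x) = (Pal w · x)⁽⁺⁾`. -/
def Pal {A : Type*} [DecidableEq A] (w : List A) : List A :=
  w.foldl (fun p x => palClosure (p ++ [x])) []

/-- `s` is the epistandard word directed by `Δ`, i.e. `s = lim_n Pal(Δ_1 ⋯ Δ_n)`. -/
def IsEpistandardOf {A : Type*} [DecidableEq A] (Δ : ℕ → A) (s : ℕ → A) : Prop :=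
  ∀ n, IsPref (Pal (prefWord Δ n)) s

/-- The concatenation of a finite word and an infinite word. -/
def catInf {σ : Type*} (u : List σ) (y : ℕ → σ) : ℕ → σ :=
  fun n => if h : n < u.length then u.get ⟨n, h⟩ else y (n - u.length)

/-- Prepending a letter to an infinite word. -/
def consInf {σ : Type*} (a : σ) (w : ℕ → σ) : ℕ → σ :=
  fun n => match n with
  | 0 => a
  | Nat.succ k => w k

def UltimatelyPeriodic {A : Type*} (w : ℕ → A) : Prop :=
  ∃ p N : ℕ, 0 < p ∧ ∀ n, N ≤ n → w (n + p) = w n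

/-- A factor `u` of `t` is right special if `ua`, `ub` are factors of `t` for two
distinct letters `a`, `b`. -/
def RightSpecial {A : Type*} (u : List A) (t : ℕ → A) : Prop :=
  ∃ a b : A, a ≠ b ∧ IsFactorInf (u ++ [a]) t ∧ IsFactorInf (u ++ [b]) t

/-- The combinatorial definition of episturmian words: the set of factors is closed
under reversal, and there is at most one right special factor of each length. -/
def EpisturmianC {A : Type*} (t : ℕ → A) : Prop :=
  (∀ u : List A, IsFactorInf u t → IsFactorInf u.reverse t) ∧
  ∀ u v : List A, RightSpecial u t → RightSpecial v t → u.length = v.length → u = v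

/-- The shifting factor `S_{w̆}` of `μ_{w̆}` (so that `μ_{w̆}(v) = S_{w̆}⁻¹ μ_w(v) S_{w̆}`):
`S_ε = ε`, `S_{a w̆} = L_a(S_{w̆})`, `S_{ā w̆} = L_a(S_{w̆}) a`. -/
def Sfac {A : Type*} [DecidableEq A] : List (A × Bool) → List A
  | [] => []
  | x :: v => if x.2 then Lm x.1 (Sfac v) ++ [x.1] else Lm x.1 (Sfac v)

/-- A spinned infinite word is normalized if it contains infinitely many `L`-spinned
letters but no factor of the form `ā v̄ a` (`v̄` being `R`-spinned). -/
def NormalizedInf {A : Type*} (Δ : ℕ → A × Bool) : Prop :=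
  (∀ N, ∃ n, N ≤ n ∧ (Δ n).2 = false) ∧
  ∀ (a : A) (i j : ℕ), i < j → Δ i = (a, true) →
    (∀ k, i < k → k < j → (Δ k).2 = true) → Δ j ≠ (a, false)

/-- A finite spinned word is normalized if it has no factor of the form `ā v̄ a`. -/
def NormalizedFin {A : Type*} (u : List (A × Bool)) : Prop :=
  ¬ ∃ (a : A) (w1 w2 : List (A × Bool)) (z : List A),
      u = w1 ++ (a, true) :: (z.map (fun x => (x, true)) ++ (a, false) :: w2)

/-- Strict lexicographic order on infinite words induced by the order on letters. -/
def LexLt {A : Type*} [LinearOrder A] (x y : ℕ → A) : Prop :=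
  ∃ n : ℕ, (∀ i, i < n → x i = y i) ∧ x n < y n

/-- An infinite word is an infinite Lyndon word if it is strictly lexicographically
smaller than each of its proper suffixes. -/
def InfLyndon {A : Type*} [LinearOrder A] (w : ℕ → A) : Prop :=
  ∀ i : ℕ, 0 < i → LexLt w (fun n => w (n + i))

/-- A return to `v` in `w`: the segment of `w` between two consecutive occurrences
of `v`. -/
def IsReturn {σ : Type*} (v : List σ) (w : ℕ → σ) (r : List σ) : Prop :=
  ∃ k k' : ℕ, k < k' ∧ OccursAt v w k ∧ OccursAt v w k' ∧
    (∀ j, k < j → j < k' → ¬ OccursAt v w j) ∧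
    r = List.ofFn (fun i : Fin (k' - k) => w (k + i))

/-- `u` is a quasiperiod of the finite word `z`: every position of `z` falls within
some occurrence of `u` in `z`. -/
def IsQuasiperiodFin {A : Type*} (u z : List A) : Prop :=
  u ≠ [] ∧ ∀ i, i < z.length → ∃ k, k ≤ i ∧ i < k + u.length ∧ u <+: z.drop k

/-! ### Prefixes and occurrences -/

section Words

variable {σ : Type*}

theorem occursAt_nil (x : ℕ → σ) (k : ℕ) : OccursAt [] x k := by
  intro i h; simp at h

theorem occursAt_cons (c : σ) (u : List σ) (x : ℕ → σ) (k : ℕ) :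
    OccursAt (c :: u) x k ↔ x k = c ∧ OccursAt u x (k + 1) := by
  constructor
  · intro h
    refine ⟨(h 0 (by simp)).symm, fun i hi => ?_⟩
    have := h (i + 1) (by simpa using hi)
    simp only [List.get_eq_getElem, List.getElem_cons_succ] at this ⊢
    rw [this]; congr 1; omega
  · rintro ⟨h0, h⟩ i hi
    cases i with
    | zero => simpa using h0.symm
    | succ i =>
      have := h i (by simpa using hi)
      simp only [List.get_eq_getElem, List.getElem_cons_succ] at this ⊢
      rw [this]; congr 1; omega

theorem occursAt_append (u v : List σ) (x : ℕ → σ) (k : ℕ) :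
    OccursAt (u ++ v) x k ↔ OccursAt u x k ∧ OccursAt v x (k + u.length) := by
  induction u generalizing k with
  | nil => simp [occursAt_nil]
  | cons c u ih =>
    simp only [List.cons_append, occursAt_cons, ih, List.length_cons]
    rw [and_assoc, show k + 1 + u.length = k + (u.length + 1) by omega]

theorem isPref_iff (u : List σ) (x : ℕ → σ) : IsPref u x ↔ OccursAt u x 0 := by
  simp [IsPref, OccursAt]

theorem IsPref.mono_left {u v : List σ} {x : ℕ → σ} (hv : IsPref v x) (h : u <+: v) :
    IsPref u x := by
  obtain ⟨r, rfl⟩ := h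
  rw [isPref_iff, occursAt_append] at hv
  exact (isPref_iff _ _).2 hv.1

@[simp] theorem prefWord_length (w : ℕ → σ) (n : ℕ) : (prefWord w n).length = n := by
  simp [prefWord]

theorem prefWord_succ (w : ℕ → σ) (n : ℕ) : prefWord w (n + 1) = prefWord w n ++ [w n] := by
  apply List.ext_getElem
  · simp
  · intro i h1 h2
    simp only [prefWord_length] at h1
    by_cases h : i < n
    · rw [List.getElem_append_left (by simpa using h)]; simp [prefWord, -List.ofFn_succ]
    · have : i = n := by omega
      subst this
      simp [prefWord, -List.ofFn_succ]

theorem prefWord_succ' (w : ℕ → σ) (n : ℕ) :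
    prefWord w (n + 1) = w 0 :: prefWord (fun k => w (k + 1)) n := by
  simp [prefWord, List.ofFn_succ]

theorem IsPref.prefWord_le {u : List σ} {x : ℕ → σ} (hu : IsPref u x) {n : ℕ}
    (h : n ≤ u.length) : prefWord x n <+: u := by
  rw [List.prefix_iff_eq_take]
  apply List.ext_getElem
  · simpa using h
  · intro i h1 h2
    simp only [prefWord_length] at h1
    have := hu i (by omega)
    simp only [List.get_eq_getElem] at this
    simp [prefWord, this]

end Words

/-! ### Palindromic closure and Justin's formula -/

section Justin

variable {A : Type*} [DecidableEq A]

@[simp] theorem Lm_nil (c : A) : Lm c [] = [] := rfl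

theorem Lm_cons (c b : A) (u : List A) :
    Lm c (b :: u) = (if b = c then [c] else [c, b]) ++ Lm c u := by
  simp [Lm]

theorem Lm_append (c : A) (u v : List A) : Lm c (u ++ v) = Lm c u ++ Lm c v := by
  simp [Lm]

/-- Since `L_c(u) c = c R_c(u)`, reversal turns `L_c(u) c` into `L_c(uᴿ) c`; consequently
`L_c(u) c` is a palindrome exactly when `u` is. -/
theorem Lm_reverse (c : A) (u : List A) :
    (Lm c u ++ [c]).reverse = Lm c u.reverse ++ [c] := by
  induction u with
  | nil => simp
  | cons b u ih =>
    rw [Lm_cons, List.append_assoc, List.reverse_append, ih, List.reverse_cons, Lm_append,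
      Lm_cons]
    split_ifs with h <;> simp

theorem Lm_append_injective (c : A) {u v : List A} (h : Lm c u ++ [c] = Lm c v ++ [c]) :
    u = v := by
  have key : ∀ (u : List A) (b : A) (r : List A), b ≠ c → Lm c u ++ [c] ≠ b :: r := by
    intro u b r hb h
    cases u with
    | nil => simp at h; exact hb h.1.symm
    | cons d u =>
      rw [Lm_cons] at h
      split_ifs at h <;> simp at h <;> exact hb h.1.symm
  induction u generalizing v with
  | nil =>
    cases v with
    | nil => rfl
    | cons d v =>
      rw [Lm_cons] at h
      split_ifs at h <;> simp at h
  | cons b u ih =>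
    cases v with
    | nil =>
      rw [Lm_cons] at h
      split_ifs at h <;> simp at h
    | cons d v =>
      rw [Lm_cons, Lm_cons] at h
      by_cases hb : b = c <;> by_cases hd : d = c
      · simp [hb, hd] at h
        rw [hb, hd, ih (v := v) (by rw [h])]
      · simp [hb, hd] at h
        exact absurd h (key u d _ hd)
      · simp [hb, hd] at h
        exact absurd h.symm (key v b _ hb)
      · simp [hb, hd] at h
        rw [h.1, ih (v := v) (by rw [h.2])]

theorem Lm_palindrome (c : A) (u : List A) :
    (Lm c u ++ [c]).reverse = Lm c u ++ [c] ↔ u.reverse = u := by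
  rw [Lm_reverse]
  exact ⟨fun h => Lm_append_injective c h, fun h => by rw [h]⟩

/-- Every occurrence of `c` in `L_c(u) c` starts a block, so a suffix beginning with `c` is
itself of the form `L_c(u₂) c` for a suffix `u₂` of `u`. -/
theorem Lm_suffix (c : A) (u p q : List A) (h : Lm c u ++ [c] = p ++ c :: q) :
    ∃ u1 u2, u = u1 ++ u2 ∧ c :: q = Lm c u2 ++ [c] := by
  induction u generalizing p with
  | nil =>
    cases p with
    | nil => exact ⟨[], [], rfl, by simpa using h.symm⟩
    | cons d p => simp at h
  | cons b u ih =>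
    cases p with
    | nil => exact ⟨[], b :: u, rfl, by simpa using h.symm⟩
    | cons d p =>
      rw [Lm_cons] at h
      by_cases hb : b = c
      · simp only [hb, if_true, List.cons_append, List.nil_append, List.cons.injEq] at h
        obtain ⟨u1, u2, h1, h2⟩ := ih p h.2
        exact ⟨b :: u1, u2, by simp [h1], h2⟩
      · simp only [hb, if_false, List.cons_append, List.nil_append, List.cons.injEq] at h
        cases p with
        | nil => simp at h; exact absurd h.2.1 hb
        | cons d' p =>
          simp only [List.cons_append, List.cons.injEq] at h
          obtain ⟨u1, u2, h1, h2⟩ := ih p h.2.2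
          exact ⟨b :: u1, u2, by simp [h1], h2⟩

/-- In `L_c(u) c`, every letter other than `c` is preceded by `c`. -/
theorem Lm_before (c : A) (u p r : List A) (y : A) (hy : y ≠ c)
    (h : Lm c u ++ [c] = p ++ y :: r) : ∃ p', p = p' ++ [c] := by
  induction u generalizing p with
  | nil =>
    cases p with
    | nil => simp at h; exact absurd h.1.symm hy
    | cons d p => simp at h
  | cons b u ih =>
    rw [Lm_cons] at h
    cases p with
    | nil => split_ifs at h <;> simp at h <;> exact absurd h.1.symm hy
    | cons d p =>
      by_cases hb : b = c
      · simp only [hb, if_true, List.cons_append, List.nil_append, List.cons.injEq] at h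
        obtain ⟨p', rfl⟩ := ih p h.2
        exact ⟨d :: p', rfl⟩
      · simp only [hb, if_false, List.cons_append, List.nil_append, List.cons.injEq] at h
        cases p with
        | nil => exact ⟨[], by simp [h.1]⟩
        | cons d' p =>
          simp only [List.cons_append, List.cons.injEq] at h
          obtain ⟨p', rfl⟩ := ih p h.2.2
          exact ⟨d :: d' :: p', rfl⟩

theorem Lm_length_le (c : A) {u1 u2 v q : List A} (h : u1 ++ u2 = v ++ q)
    (hl : u2.length ≤ q.length) : (Lm c u2).length ≤ (Lm c q).length := by
  have h1 : u2 <:+ v ++ q := ⟨u1, h⟩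
  have h2 : q <:+ v ++ q := ⟨v, rfl⟩
  obtain ⟨r, rfl⟩ := List.suffix_of_suffix_length_le h1 h2 hl
  rw [Lm_append]; simp

/-- `w = v q` with `q` the longest palindromic suffix of `w`. -/
def IsLPS (w v q : List A) : Prop :=
  w = v ++ q ∧ q.reverse = q ∧
    ∀ v' q' : List A, w = v' ++ q' → q'.reverse = q' → q'.length ≤ q.length

theorem palClosure_spec (w : List A) :
    ∃ v q, IsLPS w v q ∧ palClosure w = v ++ q ++ v.reverse := by
  set P : ℕ → Prop :=
    fun k => (w.drop (w.length - k)).reverse = w.drop (w.length - k) with hP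
  set k := Nat.findGreatest P w.length with hk
  have hle : k ≤ w.length := Nat.findGreatest_le _
  have hPk : P k := by
    apply Nat.findGreatest_spec (P := P) (Nat.zero_le _)
    simp [hP]
  refine ⟨w.take (w.length - k), w.drop (w.length - k), ⟨by simp, hPk, ?_⟩, ?_⟩
  · intro v' q' hw hq
    have hl : q'.length ≤ w.length := by simp [hw]
    have h1 : P q'.length := by
      have : w.drop (w.length - q'.length) = q' := by
        rw [hw]; simp
      simp only [hP]
      rw [this, hq]
    have := Nat.le_findGreatest hl h1
    simp only [List.length_drop]
    omega
  · rw [List.take_append_drop]; rfl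

theorem IsLPS.palClosure_eq {w v q : List A} (h : IsLPS w v q) :
    palClosure w = v ++ q ++ v.reverse := by
  obtain ⟨v', q', h', e⟩ := palClosure_spec w
  have hl : q.length = q'.length :=
    le_antisymm (h'.2.2 _ _ h.1 h.2.1) (h.2.2 _ _ h'.1 h'.2.1)
  have := List.append_inj' (h.1.symm.trans h'.1) hl
  rw [e, this.1, this.2]

theorem Lm_sandwich (c : A) (v q : List A) :
    Lm c v ++ (Lm c q ++ [c]) ++ (Lm c v).reverse = Lm c (v ++ q ++ v.reverse) ++ [c] := by
  rw [Lm_append, Lm_append, List.append_assoc (Lm c v ++ Lm c q), ← Lm_reverse]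
  simp

/-- Palindromic closure commutes with `u ↦ L_c(u) c`: the longest palindromic suffix of `L_c(u) c`
is `L_c(q) c`, with `q` the one of `u`. -/
theorem palClosure_Lm_self (c : A) (u : List A) :
    palClosure (Lm c u ++ [c]) = Lm c (palClosure u) ++ [c] := by
  obtain ⟨v, q, ⟨hu, hq, hm⟩, e⟩ := palClosure_spec u
  have : IsLPS (Lm c u ++ [c]) (Lm c v) (Lm c q ++ [c]) := by
    refine ⟨by rw [hu, Lm_append, List.append_assoc], (Lm_palindrome c q).2 hq, ?_⟩
    intro v' q' h hq'
    rcases List.eq_nil_or_concat q' with rfl | ⟨r, d, rfl⟩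
    · simp
    have hd : d = c := by
      rw [List.concat_eq_append, ← List.append_assoc] at h
      have := List.append_inj_right' h rfl
      simpa using this.symm
    subst hd
    have hs : ∃ r', r.concat d = d :: r' := by
      rw [← hq', List.concat_eq_append]; exact ⟨r.reverse, by simp⟩
    obtain ⟨r', hr'⟩ := hs
    rw [hr'] at h hq' ⊢
    obtain ⟨u1, u2, h1, h2⟩ := Lm_suffix d u v' r' h
    rw [h2] at hq' ⊢
    have h3 := hm u1 u2 h1 ((Lm_palindrome d u2).1 hq')
    have := Lm_length_le d (h1.symm.trans hu) h3
    simpa using this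
  rw [this.palClosure_eq, e, Lm_sandwich]

/-- For a word ending in `y ≠ c`, the final `c` of `L_c(u) c` is supplied by the closure. -/
theorem palClosure_Lm_ne (c y : A) (hy : y ≠ c) (P : List A) :
    palClosure (Lm c (P ++ [y])) = Lm c (palClosure (P ++ [y])) ++ [c] := by
  obtain ⟨v, q, ⟨hu, hq, hm⟩, e⟩ := palClosure_spec (P ++ [y])
  have hlast : ∀ v' q' : List A, q' ≠ [] → q'.reverse = q' →
      (∃ p, v' ++ q' = p ++ [y]) → ∃ r, q' = y :: r := by
    rintro v' q' hne hpal ⟨p, hp⟩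
    rcases List.eq_nil_or_concat q' with rfl | ⟨r, d, rfl⟩
    · exact absurd rfl hne
    rw [List.concat_eq_append, ← List.append_assoc] at hp
    have : d = y := by simpa using List.append_inj_right' hp rfl
    subst this
    rw [← hpal]; exact ⟨r.reverse, by simp⟩
  have hqne : q ≠ [] := by
    rintro rfl
    have := hm P [y] rfl rfl
    simp at this
  obtain ⟨r, hr⟩ := hlast v q hqne hq ⟨P, hu.symm⟩
  -- `L_c(q) = c q₁` with `q₁` the longest palindromic suffix of `L_c(P y)`.
  obtain ⟨q1, hq1⟩ : ∃ q1, Lm c q = c :: q1 := ⟨_, by rw [hr, Lm_cons, if_neg hy]; rfl⟩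
  have hq1p : q1.reverse = q1 := by
    have := (Lm_palindrome c q).2 hq
    rw [hq1] at this
    simpa using this
  have : IsLPS (Lm c (P ++ [y])) (Lm c v ++ [c]) q1 := by
    refine ⟨by rw [hu, Lm_append, hq1]; simp, hq1p, ?_⟩
    intro v' q' h hq'
    by_cases hne : q' = []
    · simp [hne]
    obtain ⟨r, rfl⟩ := hlast v' q' hne hq'
      ⟨Lm c P ++ [c], by rw [← h, Lm_append, Lm_cons, if_neg hy]; simp⟩
    have h' : Lm c (P ++ [y]) ++ [c] = v' ++ y :: (r ++ [c]) := by rw [h]; simp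
    obtain ⟨p', rfl⟩ := Lm_before c _ v' _ y hy h'
    obtain ⟨u1, u2, h1, h2⟩ := Lm_suffix c (P ++ [y]) p' (y :: r ++ [c]) (by rw [h']; simp)
    have hp2 : u2.reverse = u2 := by
      rw [← Lm_palindrome c, ← h2]
      rw [List.reverse_cons, List.reverse_append, hq']; simp
    have := Lm_length_le c (h1.symm.trans hu) (hm u1 u2 h1 hp2)
    have h2' := congrArg List.length h2
    rw [hq1] at this
    simp at this h2' ⊢
    omega
  rw [this.palClosure_eq, e, ← Lm_sandwich, hq1]
  simp

@[simp] theorem Pal_nil : Pal ([] : List A) = [] := rfl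

theorem Pal_concat (v : List A) (y : A) : Pal (v ++ [y]) = palClosure (Pal v ++ [y]) := by
  simp [Pal]

/-- Justin's formula `Pal(c v) = L_c(Pal(v)) c`. -/
theorem Pal_cons (c : A) (v : List A) : Pal (c :: v) = Lm c (Pal v) ++ [c] := by
  induction v using List.reverseRecOn with
  | nil =>
    have : IsLPS [c] [] [c] := ⟨rfl, rfl, fun v' q' h _ => by
      have := congrArg List.length h
      simp at this ⊢; omega⟩
    have h := Pal_concat [] c
    simp only [List.nil_append, Pal_nil] at h
    rw [h, this.palClosure_eq]; simp
  | append_singleton v y ih =>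
    rw [← List.cons_append, Pal_concat, ih, Pal_concat]
    by_cases hy : y = c
    · subst hy
      rw [← palClosure_Lm_self, Lm_append]
      simp [Lm_cons]
    · rw [← palClosure_Lm_ne c y hy, Lm_append]
      simp [Lm_cons, hy]

end Justin

/-! ### Epistandard words and their desubstitution -/

section Standard

variable {A : Type*} [DecidableEq A]

theorem Pal_prefWord_succ (Δ : ℕ → A) (n : ℕ) :
    Pal (prefWord Δ n) ++ [Δ n] <+: Pal (prefWord Δ (n + 1)) := by
  rw [prefWord_succ, Pal_concat]
  exact List.prefix_append _ _

theorem Pal_prefWord_mono (Δ : ℕ → A) {m n : ℕ} (h : m ≤ n) :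
    Pal (prefWord Δ m) <+: Pal (prefWord Δ n) := by
  induction n, h using Nat.le_induction with
  | base => exact List.prefix_refl _
  | succ n _ ih => exact ih.trans ((List.prefix_append _ _).trans (Pal_prefWord_succ Δ n))

theorem le_Pal_length (Δ : ℕ → A) (n : ℕ) : n ≤ (Pal (prefWord Δ n)).length := by
  induction n with
  | zero => simp
  | succ n ih =>
    have := (Pal_prefWord_succ Δ n).length_le
    simp at this; omega

/-- The epistandard word `lim Pal(Δ₀ ⋯ Δₙ₋₁)` directed by `Δ`. -/
def stdWord (Δ : ℕ → A) (n : ℕ) : A :=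
  (Pal (prefWord Δ (n + 1)))[n]'(le_Pal_length Δ (n + 1))

theorem stdWord_spec (Δ : ℕ → A) : IsEpistandardOf Δ (stdWord Δ) := by
  intro n i hi
  rw [List.get_eq_getElem]
  unfold stdWord
  rcases le_total n (i + 1) with h | h
  · exact (Pal_prefWord_mono Δ h).getElem hi
  · exact ((Pal_prefWord_mono Δ h).getElem (le_Pal_length Δ (i + 1))).symm

theorem IsEpistandardOf.unique {Δ : ℕ → A} {s s' : ℕ → A} (h : IsEpistandardOf Δ s)
    (h' : IsEpistandardOf Δ s') : s = s' := by
  funext i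
  have hi : i < (Pal (prefWord Δ (i + 1))).length := le_Pal_length Δ (i + 1)
  rw [← h (i + 1) i hi, h' (i + 1) i hi]

/-- Justin's formula in the limit: `s = L_c(s')` where `c` is the first letter of the
directive word of `s` and `s'` is directed by the remaining letters. -/
theorem stdWord_subst (Δ : ℕ → A) :
    SubstOf (fun b => muS (Δ 0, false) [b]) (stdWord (fun k => Δ (k + 1))) (stdWord Δ) := by
  intro n
  have h1 : prefWord (stdWord (fun k => Δ (k + 1))) n <+:
      Pal (prefWord (fun k => Δ (k + 1)) n) :=
    (stdWord_spec (fun k => Δ (k + 1)) n).prefWord_le (le_Pal_length _ n)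
  apply (stdWord_spec Δ (n + 1)).mono_left
  rw [prefWord_succ', Pal_cons]
  obtain ⟨r, hr⟩ := h1
  rw [← hr, Lm_append, List.append_assoc]
  have : ∀ u : List A, u.flatMap (fun b => muS (Δ 0, false) [b]) = Lm (Δ 0) u := by
    intro u; simp [muS, Lm]
  rw [this]
  exact List.prefix_append _ _

end Standard

/-! ### Images of infinite words under one spinned letter -/

section Steps

variable {A : Type*} [DecidableEq A]

/-- `x = μ_p(w)`, where `pos i` is the position in `x` at which the image of the letter `w i`
starts. For an `L`-spinned letter `c`, both `c` and `cb` are followed by `c`, whence the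
uniform description `x (pos i + 1) = w i`. -/
structure StepAt (p : A × Bool) (w x : ℕ → A) (pos : ℕ → ℕ) : Prop where
  zero : pos 0 = 0
  succ : ∀ i, pos (i + 1) = pos i + if w i = p.1 then 1 else 2
  left : p.2 = false → ∀ i, x (pos i) = p.1 ∧ x (pos i + 1) = w i
  right : p.2 = true → ∀ i, x (pos i) = w i ∧ (w i ≠ p.1 → x (pos i + 1) = p.1)

theorem muS_false (c b : A) : muS (c, false) [b] = if b = c then [c] else [c, b] := by
  simp [muS, Lm]

theorem muS_true (c b : A) : muS (c, true) [b] = if b = c then [c] else [b, c] := by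
  simp [muS, Rm]

theorem muS_length (p : A × Bool) (b : A) :
    (muS p [b]).length = if b = p.1 then 1 else 2 := by
  rcases p with ⟨c, _ | _⟩
  · rw [muS_false]; split_ifs <;> rfl
  · rw [muS_true]; split_ifs <;> rfl

theorem SubstOf.exists_stepAt {p : A × Bool} {w x : ℕ → A}
    (h : SubstOf (fun b => muS p [b]) w x) : ∃ pos, StepAt p w x pos := by
  set f : A → List A := fun b => muS p [b] with hf
  have hsucc : ∀ i, (prefWord w (i + 1)).flatMap f = (prefWord w i).flatMap f ++ f (w i) := by
    intro i; rw [prefWord_succ]; simp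
  set pos : ℕ → ℕ := fun i => ((prefWord w i).flatMap f).length with hpos
  have hs : ∀ i, pos (i + 1) = pos i + if w i = p.1 then 1 else 2 := by
    intro i; simp only [hpos]; rw [hsucc, List.length_append, ← muS_length]
  have hocc : ∀ i, OccursAt (f (w i)) x (pos i) := by
    intro i
    have := h (i + 1)
    rw [hsucc, isPref_iff, occursAt_append, zero_add] at this
    exact this.2
  refine ⟨pos, rfl, hs, ?_, ?_⟩
  · intro hp i
    rcases p with ⟨c, b⟩
    simp only at hp; subst hp
    have hfirst : ∀ i, x (pos i) = c := by
      intro i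
      have := hocc i
      simp only [hf, muS_false] at this
      split_ifs at this <;> exact ((occursAt_cons _ _ _ _).1 this).1
    refine ⟨hfirst i, ?_⟩
    by_cases hc : w i = c
    · have h1 := hs i
      rw [if_pos hc] at h1
      rw [← h1, hfirst, hc]
    · have := hocc i
      simp only [hf, muS_false, if_neg hc, occursAt_cons] at this
      exact this.2.1
  · intro hp i
    rcases p with ⟨c, b⟩
    simp only at hp; subst hp
    have := hocc i
    simp only [hf, muS_true] at this
    by_cases hc : w i = c
    · rw [if_pos hc, occursAt_cons] at this
      exact ⟨this.1.trans hc.symm, fun h => absurd hc h⟩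
    · simp only [if_neg hc, occursAt_cons] at this
      exact ⟨this.1, fun _ => this.2.1⟩

variable {p : A × Bool} {w x w' x' : ℕ → A} {pos pos' : ℕ → ℕ}

theorem StepAt.substOf (h : StepAt p w x pos) : SubstOf (fun b => muS p [b]) w x := by
  have key : ∀ n, ((prefWord w n).flatMap (fun b => muS p [b])).length = pos n ∧
      IsPref ((prefWord w n).flatMap (fun b => muS p [b])) x := by
    intro n
    induction n with
    | zero => exact ⟨by simp [prefWord, h.zero], by simp [prefWord, isPref_iff, occursAt_nil]⟩
    | succ n ih =>
      rw [prefWord_succ, List.flatMap_append, List.length_append, ih.1, h.succ, isPref_iff,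
        occursAt_append, ← isPref_iff, ih.1]
      simp only [List.flatMap_singleton, muS_length, zero_add, true_and]
      refine ⟨ih.2, ?_⟩
      rcases p with ⟨c, _ | _⟩
      · have := h.left rfl n
        rw [muS_false]
        split_ifs <;> simp_all [occursAt_cons, occursAt_nil]
      · have := h.right rfl n
        rw [muS_true]
        split_ifs <;> simp_all [occursAt_cons, occursAt_nil]
  exact fun n => (key n).2

theorem StepAt.strictMono (h : StepAt p w x pos) : StrictMono pos := by
  apply strictMono_nat_of_lt_succ
  intro n; rw [h.succ]; split_ifs <;> omega

theorem StepAt.exists_pos (h : StepAt p w x pos) (n : ℕ) :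
    ∃ i, n = pos i ∨ (n = pos i + 1 ∧ w i ≠ p.1) := by
  induction n with
  | zero => exact ⟨0, Or.inl h.zero.symm⟩
  | succ n ih =>
    obtain ⟨i, hi | hi⟩ := ih
    · by_cases hc : w i = p.1
      · exact ⟨i + 1, Or.inl (by rw [h.succ, if_pos hc, hi])⟩
      · exact ⟨i, Or.inr ⟨by rw [hi], hc⟩⟩
    · exact ⟨i + 1, Or.inl (by rw [h.succ, if_neg hi.2, hi.1])⟩

/-- Equal blocks of `L` letters of the preimages have equal images. -/
theorem StepAt.agree (h : StepAt p w x pos) (h' : StepAt p w' x' pos') {i k L : ℕ}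
    (hL : ∀ j < L, w (i + j) = w' (k + j)) :
    ∃ len, L ≤ len ∧ pos (i + L) = pos i + len ∧ pos' (k + L) = pos' k + len ∧
      ∀ n < len, x (pos i + n) = x' (pos' k + n) := by
  induction L with
  | zero => exact ⟨0, le_rfl, rfl, rfl, fun n hn => absurd hn (Nat.not_lt_zero n)⟩
  | succ L ih =>
    obtain ⟨len, h1, h2, h3, h4⟩ := ih (fun j hj => hL j (by omega))
    have hw := hL L (by omega)
    have hs := h.succ (i + L)
    have hs' := h'.succ (k + L)
    rw [← hw] at hs'
    refine ⟨len + if w (i + L) = p.1 then 1 else 2, by split_ifs <;> omega,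
      by rw [← add_assoc, hs, h2, add_assoc], by rw [← add_assoc, hs', h3, add_assoc], ?_⟩
    have e0 : x (pos i + len) = x' (pos' k + len) := by
      rw [← h2, ← h3]
      cases hp : p.2
      · rw [(h.left hp _).1, (h'.left hp _).1]
      · rw [(h.right hp _).1, (h'.right hp _).1, hw]
    have e1 : w (i + L) ≠ p.1 → x (pos i + (len + 1)) = x' (pos' k + (len + 1)) := by
      intro hc
      rw [← add_assoc, ← add_assoc, ← h2, ← h3]
      cases hp : p.2
      · rw [(h.left hp _).2, (h'.left hp _).2, hw]
      · rw [(h.right hp _).2 hc, (h'.right hp _).2 (hw ▸ hc)]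
    intro n hn
    rcases lt_trichotomy n len with hlt | rfl | hgt
    · exact h4 n hlt
    · exact e0
    · split_ifs at hn with hc
      · omega
      · have : n = len + 1 := by omega
        subst this
        exact e1 hc

theorem StepAt.eq_tail (h : StepAt p w x pos) {i k : ℕ} (he : ∀ j, w (i + j) = w (k + j)) (n : ℕ) :
    x (pos i + n) = x (pos k + n) := by
  obtain ⟨len, h1, -, -, h4⟩ := h.agree h (i := i) (k := k) (L := n + 1) (fun j _ => he j)
  exact h4 n (by omega)

/-- If `s = L_c(s')`, then `a s` is the image of `a s'` under `L_a` when `c = a`, and under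
`R_c` when `c ≠ a`, because `c R_c(u) = L_c(u) c`. -/
theorem StepAt.cons {c : A} (a : A) (h : StepAt (c, false) w x pos) :
    ∃ pos', StepAt (c, decide (c ≠ a)) (consInf a w) (consInf a x) pos' := by
  have hl := h.left rfl
  have hs := h.succ
  simp only at hl hs
  by_cases hc : c = a
  · subst hc
    refine ⟨fun i => Nat.casesOn i 0 (fun i => pos i + 1), rfl, ?_, ?_, by simp⟩
    · rintro (_ | i)
      · simp [consInf, h.zero]
      · change pos (i + 1) + 1 = pos i + 1 + if w i = c then 1 else 2
        rw [hs i]; omega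
    · rintro - (_ | i)
      · refine ⟨rfl, ?_⟩
        have := (hl 0).1
        rw [h.zero] at this
        exact this
      · exact hl i
  · refine ⟨fun i => Nat.casesOn i 0 (fun i => pos i + 2), rfl, ?_, by simp [hc], ?_⟩
    · rintro (_ | i)
      · simp [consInf, h.zero, Ne.symm hc]
      · change pos (i + 1) + 2 = pos i + 2 + if w i = c then 1 else 2
        rw [hs i]; omega
    · rintro - (_ | i)
      · refine ⟨rfl, fun _ => ?_⟩
        have := (hl 0).1
        rw [h.zero] at this
        exact this
      · refine ⟨(hl i).2, fun hne => ?_⟩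
        change w i ≠ c at hne
        have h1 : pos (i + 1) = pos i + 2 := by rw [hs i, if_neg hne]
        have := (hl (i + 1)).1
        rw [h1] at this
        exact this

theorem StepAt.exists_letter {p : A × Bool} {w x : ℕ → A} {pos : ℕ → ℕ} (h : StepAt p w x pos)
    {b : A} (hb : b = p.1 ∨ ∃ i, w i = b) : ∃ i, x i = b := by
  by_cases hbp : b = p.1
  · subst hbp
    cases hp : p.2
    · exact ⟨_, (h.left hp 0).1⟩
    · by_cases hw : w 0 = p.1
      · exact ⟨_, (h.right hp 0).1.trans hw⟩
      · exact ⟨_, (h.right hp 0).2 hw⟩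
  · obtain ⟨i, hi⟩ := hb.resolve_left hbp
    cases hp : p.2
    · exact ⟨_, (h.left hp i).2.trans hi⟩
    · exact ⟨_, (h.right hp i).1.trans hi⟩

end Steps

/-! ### Chains directed by the spinned word with `a` as its only `L`-spinned letter -/

section Chains

variable {A : Type*}

theorem of_succ_imp {Q : ℕ → Prop} (h : ∀ n, Q (n + 1) → Q n) {n k : ℕ} (hnk : n ≤ k)
    (hk : Q k) : Q n := by
  induction k, hnk using Nat.le_induction with
  | base => exact hk
  | succ k _ ih => exact ih (h k hk)

/-- Propagation along a directive word: an extent `L` passes from level `n + 1` to level `n`,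
growing strictly at each of the infinitely many letters other than `a`, so that it is
unbounded at every level. -/
theorem growth {Δ : ℕ → A} {a : A} (hne : ∀ N, ∃ n, N ≤ n ∧ Δ n ≠ a) (P : ℕ → ℕ → Prop)
    (one : ∀ n, P n 1) (step : ∀ n L, 1 ≤ L → P (n + 1) L → P n L)
    (grow : ∀ n L, 1 ≤ L → Δ n ≠ a → P (n + 1) L → P n (L + 1)) (L n : ℕ) :
    P n (L + 1) := by
  induction L generalizing n with
  | zero => exact one n
  | succ L ih =>
    obtain ⟨k, hk, hka⟩ := hne n
    exact of_succ_imp (Q := fun n => P n (L + 2)) (fun n => step n _ (by omega)) hk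
      (grow k _ (by omega) hka (ih (k + 1)))

variable [DecidableEq A]

/-- A sequence `ts` of infinite words starting with `a` such that `ts n` is the image of
`ts (n + 1)` under `L_a` if `Δ n = a`, and under `R_c` if `Δ n = c ≠ a`. -/
def Chain (a : A) (Δ : ℕ → A) (ts : ℕ → ℕ → A) : Prop :=
  ∀ n, ts n 0 = a ∧ ∃ pos, StepAt (Δ n, decide (Δ n ≠ a)) (ts (n + 1)) (ts n) pos

theorem StepAt.lt_pos {p : A × Bool} {w x : ℕ → A} {pos : ℕ → ℕ} (h : StepAt p w x pos)
    (h0 : w 0 ≠ p.1) {L : ℕ} (hL : 1 ≤ L) : L + 1 ≤ pos L := by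
  induction L, hL using Nat.le_induction with
  | base => rw [h.succ 0, if_neg h0, h.zero]
  | succ L _ ih =>
    have := h.strictMono (Nat.lt_add_one L)
    omega

theorem chain_of_directs {a : A} {Δ : ℕ → A} (hΔ : ∀ N, ∃ n, N ≤ n ∧ Δ n = a) {t : ℕ → A}
    (h : Directs (fun n => (Δ n, decide (Δ n ≠ a))) t) :
    ∃ ts, ts 0 = t ∧ Chain a Δ ts := by
  obtain ⟨ts, h0, -, hs⟩ := h
  have hstep := fun n => (hs n).exists_stepAt
  refine ⟨ts, h0, fun n => ⟨?_, hstep n⟩⟩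
  obtain ⟨k, hk, hka⟩ := hΔ n
  have hleft : ∀ n, Δ n = a → ts n 0 = a := by
    intro n hn
    obtain ⟨pos, hp⟩ := hstep n
    have := (hp.left (by simp [hn]) 0).1
    rw [hp.zero] at this
    exact this.trans hn
  refine of_succ_imp (Q := fun n => ts n 0 = a) (fun n hn => ?_) hk (hleft k hka)
  by_cases hc : Δ n = a
  · exact hleft n hc
  · obtain ⟨pos, hp⟩ := hstep n
    have := (hp.right (by simp [hc]) 0).1
    rwa [hp.zero, hn] at this

theorem Chain.unique {a : A} {Δ : ℕ → A} (hne : ∀ N, ∃ n, N ≤ n ∧ Δ n ≠ a)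
    {ts ts' : ℕ → ℕ → A} (h : Chain a Δ ts) (h' : Chain a Δ ts') : ts = ts' := by
  have step : ∀ n L, (∀ j < L, ts (n + 1) j = ts' (n + 1) j) →
      ∃ len, L ≤ len ∧ (1 ≤ L → Δ n ≠ a → L + 1 ≤ len) ∧ ∀ j < len, ts n j = ts' n j := by
    intro n L hL
    obtain ⟨pos, hp⟩ := (h n).2
    obtain ⟨pos', hp'⟩ := (h' n).2
    obtain ⟨len, h1, h2, h3, h4⟩ := hp.agree hp' (i := 0) (k := 0) (L := L) (by simpa using hL)
    simp only [hp.zero, hp'.zero, zero_add] at h2 h4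
    refine ⟨len, h1, fun hL1 hc => ?_, h4⟩
    rw [← h2]
    exact hp.lt_pos (by rw [(h (n + 1)).1]; exact Ne.symm hc) hL1
  have := growth hne (fun n L => ∀ j < L, ts n j = ts' n j)
    (fun n j hj => by
      obtain rfl : j = 0 := by omega
      rw [(h n).1, (h' n).1])
    (fun n L _ hL => by
      obtain ⟨len, h1, -, h3⟩ := step n L hL
      exact fun j hj => h3 j (by omega))
    (fun n L hL1 hc hL => by
      obtain ⟨len, -, h2, h3⟩ := step n L hL
      exact fun j hj => h3 j (by have := h2 hL1 hc; omega))
  funext n j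
  exact this j n j (by omega)

theorem Chain.recurrent {a : A} {Δ : ℕ → A} (hΔ : ∀ N, ∃ n, N ≤ n ∧ Δ n = a)
    (hne : ∀ N, ∃ n, N ≤ n ∧ Δ n ≠ a) {ts : ℕ → ℕ → A} (h : Chain a Δ ts) (n : ℕ) :
    Recurrent (ts n) := by
  have step : ∀ n L, (∀ N, ∃ m, N ≤ m ∧ ∀ j < L, ts (n + 1) (m + j) = ts (n + 1) j) →
      ∃ len, L ≤ len ∧ (1 ≤ L → Δ n ≠ a → L + 1 ≤ len) ∧
        ∀ N, ∃ m, N ≤ m ∧ ∀ j < len, ts n (m + j) = ts n j := by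
    intro n L hL
    obtain ⟨pos, hp⟩ := (h n).2
    refine ⟨pos L, hp.strictMono.le_apply, fun hL1 hc =>
      hp.lt_pos (by rw [(h (n + 1)).1]; exact Ne.symm hc) hL1, fun N => ?_⟩
    obtain ⟨m, hm, hmL⟩ := hL N
    obtain ⟨len, h1, h2, h3, h4⟩ := hp.agree hp (i := m) (k := 0) (L := L) (by simpa using hmL)
    simp only [hp.zero, zero_add] at h3 h4
    rw [h3]
    exact ⟨pos m, hm.trans hp.strictMono.le_apply, h4⟩
  have hstep : ∀ n L, 1 ≤ L →
      (∀ N, ∃ m, N ≤ m ∧ ∀ j < L, ts (n + 1) (m + j) = ts (n + 1) j) →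
      (∀ N, ∃ m, N ≤ m ∧ ∀ j < L, ts n (m + j) = ts n j) := by
    intro n L _ hL N
    obtain ⟨len, h1, -, h3⟩ := step n L hL
    obtain ⟨m, hm, hmL⟩ := h3 N
    exact ⟨m, hm, fun j hj => hmL j (by omega)⟩
  have key := growth hne
    (fun n L => ∀ N, ∃ m, N ≤ m ∧ ∀ j < L, ts n (m + j) = ts n j)
    (fun n => by
      obtain ⟨k, hk, hka⟩ := hΔ n
      refine of_succ_imp
        (Q := fun n => ∀ N, ∃ m, N ≤ m ∧ ∀ j < 1, ts n (m + j) = ts n j)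
        (fun n => hstep n 1 le_rfl) hk fun N => ?_
      -- At a level where `L_a` is applied, every block starts with `a`.
      obtain ⟨pos, hp⟩ := (h k).2
      refine ⟨pos N, hp.strictMono.le_apply, fun j hj => ?_⟩
      obtain rfl : j = 0 := by omega
      rw [(h k).1, add_zero, (hp.left (by simp [hka]) N).1, hka])
    hstep
    (fun n L hL1 hc hL N => by
      obtain ⟨len, -, h2, h3⟩ := step n L hL
      obtain ⟨m, hm, hmL⟩ := h3 N
      exact ⟨m, hm, fun j hj => hmL j (by have := h2 hL1 hc; omega)⟩)
  intro u k hu N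
  obtain ⟨m, hm, hmL⟩ := key (k + u.length) n N
  refine ⟨m + k, by omega, fun i hi => ?_⟩
  rw [hu i hi, add_assoc, hmL (k + i) (by omega)]

theorem Chain.directs {a : A} {Δ : ℕ → A} (hΔ : ∀ N, ∃ n, N ≤ n ∧ Δ n = a)
    (hne : ∀ N, ∃ n, N ≤ n ∧ Δ n ≠ a) {ts : ℕ → ℕ → A} (h : Chain a Δ ts) :
    Directs (fun n => (Δ n, decide (Δ n ≠ a))) (ts 0) :=
  ⟨ts, rfl, h.recurrent hΔ hne, fun n => by
    obtain ⟨pos, hp⟩ := (h n).2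
    exact hp.substOf⟩

/-- The words `a s⁽ⁿ⁾`, with `s⁽ⁿ⁾` the epistandard word directed by the `n`-th shift of `Δ`. -/
theorem chain_stdWord (a : A) (Δ : ℕ → A) :
    Chain a Δ (fun n => consInf a (stdWord (fun k => Δ (k + n)))) := by
  intro n
  refine ⟨rfl, ?_⟩
  obtain ⟨pos, hp⟩ := (stdWord_subst (fun k => Δ (k + n))).exists_stepAt
  have h := hp.cons a
  have e : (fun k => Δ (k + 1 + n)) = fun k => Δ (k + (n + 1)) := by
    funext k; congr 1; omega
  simp only [zero_add, e] at h
  exact h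

end Chains

/-! ### The lexicographic order and infinite Lyndon words -/

section Lyndon

variable {A : Type*} [LinearOrder A]

theorem LexLt.asymm {x y : ℕ → A} (h : LexLt x y) (h' : LexLt y x) : False := by
  obtain ⟨n, h1, h2⟩ := h
  obtain ⟨m, h3, h4⟩ := h'
  rcases lt_trichotomy n m with h | rfl | h
  · rw [h3 n h] at h2; exact lt_irrefl _ h2
  · exact lt_asymm h2 h4
  · rw [h1 m h] at h4; exact lt_irrefl _ h4

theorem lexLt_irrefl (x : ℕ → A) : ¬ LexLt x x := fun h => h.asymm h

theorem lexLt_trichotomy (x y : ℕ → A) : LexLt x y ∨ x = y ∨ LexLt y x := by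
  classical
  by_cases h : x = y
  · exact Or.inr (Or.inl h)
  · have hex : ∃ n, x n ≠ y n := by
      by_contra! hc
      exact h (funext hc)
    have hmin : ∀ i < Nat.find hex, x i = y i := fun i hi => by
      simpa using Nat.find_min hex hi
    rcases lt_or_gt_of_ne (Nat.find_spec hex) with hlt | hgt
    · exact Or.inl ⟨_, hmin, hlt⟩
    · exact Or.inr (Or.inr ⟨_, fun i hi => (hmin i hi).symm, hgt⟩)

/-- A recurrent infinite Lyndon word is aperiodic: an eventual period would, by recurrence of
prefixes, be a period, making the word equal to one of its proper suffixes. -/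
theorem InfLyndon.not_ultimatelyPeriodic_tail {t : ℕ → A} (h : InfLyndon t) (hr : Recurrent t)
    {p N : ℕ} (hp : 0 < p) (hN : ∀ n, N ≤ n → t (n + p) = t n) : False := by
  obtain ⟨m, -, hm⟩ := h p hp
  obtain ⟨k, hk, hocc⟩ := hr (prefWord t (m + p + 1)) 0
    (fun i hi => by simp [prefWord, -List.ofFn_succ]) N
  have key : ∀ i, i < m + p + 1 → t i = t (k + i) := fun i hi => by
    have := hocc i (by simpa using hi)
    simpa [prefWord, -List.ofFn_succ] using this
  have h1 := key m (by omega)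
  have h2 := key (m + p) (by omega)
  rw [← add_assoc, hN (k + m) (by omega), ← h1] at h2
  exact absurd hm (by simp [h2])

theorem InfLyndon.first {a : A} (ha : ∀ b, a ≤ b) {t : ℕ → A} (h : InfLyndon t) {i : ℕ}
    (hi : t i = a) : t 0 = a := by
  rcases Nat.eq_zero_or_pos i with rfl | hpos
  · exact hi
  · obtain ⟨n, h1, h2⟩ := h i hpos
    rcases Nat.eq_zero_or_pos n with rfl | hn
    · simp only [zero_add, hi] at h2
      exact absurd h2 (not_lt.2 (ha _))
    · have := h1 0 hn
      simpa [hi] using this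

variable [DecidableEq A]

/-- The morphisms `L_c` and `R_c` preserve the strict lexicographic order: the first
difference of the images is carried by the letters of the preimages themselves. -/
theorem StepAt.lexLt {p : A × Bool} {w x : ℕ → A} {pos : ℕ → ℕ} (h : StepAt p w x pos) {i k : ℕ}
    (hlt : LexLt (fun n => w (n + i)) (fun n => w (n + k))) :
    LexLt (fun n => x (n + pos i)) (fun n => x (n + pos k)) := by
  obtain ⟨m, h1, h2⟩ := hlt
  obtain ⟨len, -, h4, h5, h6⟩ := h.agree h (i := i) (k := k) (L := m)
    (fun j hj => by simpa [add_comm] using h1 j hj)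
  cases hp : p.2
  · refine ⟨len + 1, fun n hn => ?_, ?_⟩
    · simp only [add_comm n]
      rcases Nat.lt_succ_iff_lt_or_eq.1 hn with hn | rfl
      · exact h6 n hn
      · rw [← h4, ← h5, (h.left hp _).1, (h.left hp _).1]
    · have e1 := (h.left hp (i + m)).2
      have e2 := (h.left hp (k + m)).2
      rw [h4] at e1
      rw [h5] at e2
      simp only [show ∀ q, len + 1 + q = q + len + 1 by intro q; omega]
      rw [e1, e2, add_comm i, add_comm k]
      exact h2
  · refine ⟨len, fun n hn => ?_, ?_⟩
    · simp only [add_comm n]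
      exact h6 n hn
    · have e1 := (h.right hp (i + m)).1
      have e2 := (h.right hp (k + m)).1
      rw [h4] at e1
      rw [h5] at e2
      simp only [add_comm len]
      rw [e1, e2, add_comm i, add_comm k]
      exact h2

theorem StepAt.infLyndon {p : A × Bool} {w x : ℕ → A} {pos : ℕ → ℕ} (h : StepAt p w x pos)
    (hx : InfLyndon x) : InfLyndon w := by
  intro i hi
  have hpos : 0 < pos i := by
    have := h.strictMono hi
    omega
  have hlt := hx (pos i) hpos
  have hx0 : (fun n => x (n + pos 0)) = x := by simp [h.zero]
  have hw0 : (fun n => w (n + 0)) = w := rfl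
  rcases lexLt_trichotomy w (fun n => w (n + i)) with hl | he | hg
  · exact hl
  · have : x = fun n => x (n + pos i) := by
      funext n
      have := h.eq_tail (i := 0) (k := i)
        (fun j => by simpa [add_comm] using congrFun he j) n
      simpa [h.zero, add_comm] using this
    rw [← this] at hlt
    exact absurd hlt (lexLt_irrefl x)
  · rw [← hw0] at hg
    have := h.lexLt hg
    rw [hx0] at this
    exact (hlt.asymm this).elim

/-- Infinite descent: a suffix of `ts n` that is not larger than `ts n` starts with `a`, hence
at a block boundary, so it comes from such a suffix of `ts (n + 1)`, at a position that is no
larger, and strictly smaller whenever `Δ n ≠ a`. -/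
theorem Chain.infLyndon {a : A} (ha : ∀ b, a ≤ b) {Δ : ℕ → A}
    (hne : ∀ N, ∃ n, N ≤ n ∧ Δ n ≠ a) {ts : ℕ → ℕ → A} (h : Chain a Δ ts) (n : ℕ) :
    InfLyndon (ts n) := by
  have step : ∀ n i, 0 < i → ¬ LexLt (ts n) (fun j => ts n (j + i)) →
      ∃ i', 0 < i' ∧ i' ≤ i ∧ (Δ n ≠ a → i' < i) ∧
        ¬ LexLt (ts (n + 1)) (fun j => ts (n + 1) (j + i')) := by
    intro n i hi hlt
    obtain ⟨h0, pos, hp⟩ := h n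
    have hia : ts n i = a := by
      by_contra hc
      refine hlt ⟨0, by simp, ?_⟩
      simp only [zero_add, h0]
      exact lt_of_le_of_ne (ha _) (Ne.symm hc)
    have hpos : ∃ i', i = pos i' := by
      obtain ⟨i', he | ⟨he, hw⟩⟩ := hp.exists_pos i
      · exact ⟨i', he⟩
      · by_cases hc : Δ n = a
        · have := (hp.left (by simp [hc]) i').2
          rw [← he, hia, ← hc] at this
          exact absurd this.symm hw
        · have := (hp.right (by simp [hc]) i').2 hw
          rw [← he, hia] at this
          exact absurd this.symm hc
    obtain ⟨i', rfl⟩ := hpos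
    have hi' : 0 < i' := by
      rcases Nat.eq_zero_or_pos i' with rfl | h'
      · rw [hp.zero] at hi; exact absurd hi (lt_irrefl 0)
      · exact h'
    refine ⟨i', hi', hp.strictMono.le_apply, fun hc =>
      hp.lt_pos (by rw [(h (n + 1)).1]; exact Ne.symm hc) hi', fun hl => hlt ?_⟩
    have := hp.lexLt (i := 0) (k := i') hl
    simpa [hp.zero] using this
  have main : ∀ i n, 0 < i → LexLt (ts n) (fun j => ts n (j + i)) := by
    intro i
    induction i using Nat.strong_induction_on with
    | _ i ih =>
      intro n hi
      by_contra hlt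
      obtain ⟨k, hk, hka⟩ := hne n
      have hall : ∃ i', 0 < i' ∧ i' ≤ i ∧ ¬ LexLt (ts k) (fun j => ts k (j + i')) := by
        clear hka
        induction k, hk using Nat.le_induction with
        | base => exact ⟨i, hi, le_rfl, hlt⟩
        | succ k _ ihk =>
          obtain ⟨i', h1, h2, h3⟩ := ihk
          obtain ⟨i'', h4, h5, -, h6⟩ := step k i' h1 h3
          exact ⟨i'', h4, h5.trans h2, h6⟩
      obtain ⟨i', h1, h2, h3⟩ := hall
      obtain ⟨i'', h4, -, h5, h6⟩ := step k i' h1 h3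
      exact h6 (ih i'' (lt_of_lt_of_le (h5 hka) h2) (k + 1) h4)
  exact fun i hi => main i n hi

/-- A Lyndon image is never taken under `L_b` with `b ≠ a`, since it would start with `b`, nor
under `R_a`: if the preimage starts with `aᵏ c`, `c ≠ a`, then so does the image, but a later
occurrence of `aᵏ c` in the preimage produces the smaller factor `aᵏ⁺¹` in the image. -/
theorem StepAt.spin_of_infLyndon {a : A} (ha : ∀ b, a ≤ b) {p : A × Bool} {w x : ℕ → A}
    {pos : ℕ → ℕ} (h : StepAt p w x pos) (hx : InfLyndon x) (hr : Recurrent w)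
    (hxa : ∃ i, x i = a) (hw : ∃ i, w i ≠ a) : p = (p.1, decide (p.1 ≠ a)) := by
  classical
  obtain ⟨i, hi⟩ := hxa
  have hx0 : x 0 = a := hx.first ha hi
  rcases p with ⟨c, b⟩
  cases b
  · have := (h.left rfl 0).1
    rw [h.zero, hx0] at this
    simp only at this
    simp [← this]
  · suffices c ≠ a by simp [this]
    rintro rfl
    have hr' := h.right rfl
    simp only at hr'
    obtain ⟨k, hkw, hlt⟩ : ∃ k, w k ≠ c ∧ ∀ j < k, w j = c :=
      ⟨Nat.find hw, Nat.find_spec hw, fun j hj => by simpa using Nat.find_min hw hj⟩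
    have hpre : ∀ (m : ℕ), (∀ j < k, w (m + j) = c) → ∀ j ≤ k, pos (m + j) = pos m + j := by
      intro m hm j hj
      induction j with
      | zero => rfl
      | succ j ih =>
        rw [← add_assoc, h.succ, ih (by omega), if_pos (hm j (by omega)), add_assoc]
    obtain ⟨m, hm, hocc⟩ := hr (prefWord w (k + 1)) 0
      (fun i hi => by simp [prefWord, -List.ofFn_succ]) 2
    have hmw : ∀ j < k, w (m + j) = c := fun j hj => by
      have := hocc j (by simp; omega)
      refine (this.symm.trans ?_).trans (hlt j hj)
      simp [prefWord, -List.ofFn_succ]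
    -- The image of the block preceding position `m` ends with `a`.
    have hprev : x (pos m - 1) = c := by
      obtain ⟨m', rfl⟩ : ∃ m', m = m' + 1 := ⟨m - 1, by omega⟩
      rw [h.succ]
      by_cases hc : w m' = c
      · simp only [hc, if_true]
        exact (hr' m').1.trans hc
      · simp only [hc, if_false]
        exact (hr' m').2 hc
    have hm2 : 2 ≤ pos m := hm.trans h.strictMono.le_apply
    have hxk : x k = w k := by
      have := hpre 0 (by simpa using hlt) k le_rfl
      simp only [zero_add, h.zero] at this
      rw [← (hr' k).1, this]
    have hrun : ∀ n ≤ k, x (n + (pos m - 1)) = c := by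
      intro n hn
      cases n with
      | zero => rwa [zero_add]
      | succ n =>
        have e := hpre m hmw n (by omega)
        rw [show n + 1 + (pos m - 1) = pos (m + n) by omega, (hr' _).1, hmw n (by omega)]
    obtain ⟨n, h1, h2⟩ := hx (pos m - 1) (by omega)
    rcases le_or_gt n k with hn | hn
    · simp only [hrun n hn] at h2
      exact absurd h2 (not_lt.2 (ha _))
    · have := h1 k hn
      simp only [hrun k le_rfl, hxk] at this
      exact hkw this

/-- A strict episturmian Lyndon word is directed by the spinned version of its directive word
in which exactly the letters `a` have spin `L`. -/
theorem InfLyndon.exists_chain {a : A} (ha : ∀ b, a ≤ b) (hex : ∃ b, b ≠ a) {Δ : ℕ → A}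
    {ΔS : ℕ → A × Bool} (hS : ∀ n, (ΔS n).1 = Δ n) (hΔ : ∀ b : A, ∀ N, ∃ n, N ≤ n ∧ Δ n = b)
    {t : ℕ → A} (hd : Directs ΔS t) (ht : InfLyndon t) : ∃ ts, ts 0 = t ∧ Chain a Δ ts := by
  obtain ⟨ts, rfl, hrec, hs⟩ := hd
  have hstep := fun n => (hs n).exists_stepAt
  have hletter : ∀ b n, ∃ i, ts n i = b := by
    intro b n
    obtain ⟨k, hk, hkb⟩ := hΔ b n
    refine of_succ_imp (Q := fun n => ∃ i, ts n i = b) (fun n hn => ?_) hk ?_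
    · obtain ⟨pos, hp⟩ := hstep n
      exact hp.exists_letter (Or.inr hn)
    · obtain ⟨pos, hp⟩ := hstep k
      exact hp.exists_letter (Or.inl (by rw [hS, hkb]))
  have hlyn : ∀ n, InfLyndon (ts n) := by
    intro n
    induction n with
    | zero => exact ht
    | succ n ih =>
      obtain ⟨pos, hp⟩ := hstep n
      exact hp.infLyndon ih
  refine ⟨ts, rfl, fun n => ⟨(hlyn n).first ha (hletter a n).choose_spec, ?_⟩⟩
  obtain ⟨pos, hp⟩ := hstep n
  obtain ⟨b, hb⟩ := hex
  obtain ⟨i, hi⟩ := hletter b (n + 1)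
  have := hp.spin_of_infLyndon ha (hlyn n) (hrec (n + 1)) (hletter a n) ⟨i, by rw [hi]; exact hb⟩
  rw [hS] at this
  rw [this] at hp
  exact ⟨pos, hp⟩

end Lyndon

/-- an `A`-strict episturmian word `t` is an infinite Lyndon word iff
`t = a s` with `a = min A` and `s` an aperiodic `A`-strict epistandard word.
Moreover, if `Δ` is the `L`-spinned directive word of `s`, then `t = a s` is the
unique episturmian word having the same set of factors as `s` that is directed by
the spinned version of `Δ` in which every letter has spin `R` except the
occurrences of `a`, which have spin `L`. -/
theorem strict_episturmian_lyndon
    {A : Type*} [Fintype A] [LinearOrder A] [DecidableEq A]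
    (hcard : 1 < Fintype.card A)
    (a : A) (ha : ∀ b : A, a ≤ b)
    (t : ℕ → A)
    -- `t` is an `A`-strict episturmian word
    (ht : ∃ (Δ : ℕ → A) (ΔS : ℕ → A × Bool),
      (∀ n, (ΔS n).1 = Δ n) ∧ (∀ b : A, ∀ N, ∃ n, N ≤ n ∧ Δ n = b) ∧ Directs ΔS t) :
    (InfLyndon t ↔
      ∃ (Δ : ℕ → A) (s : ℕ → A),
        IsEpistandardOf Δ s ∧ (∀ b : A, ∀ N, ∃ n, N ≤ n ∧ Δ n = b) ∧
        ¬ UltimatelyPeriodic s ∧ t = consInf a s) ∧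
    (∀ (Δ : ℕ → A) (s : ℕ → A),
      IsEpistandardOf Δ s → (∀ b : A, ∀ N, ∃ n, N ≤ n ∧ Δ n = b) →
      ¬ UltimatelyPeriodic s → t = consInf a s →
      (Directs (fun n => (Δ n, decide (Δ n ≠ a))) t ∧
        (∀ u : List A, IsFactorInf u t ↔ IsFactorInf u s) ∧
        ∀ t' : ℕ → A, Episturmian t' →
          (∀ u : List A, IsFactorInf u t' ↔ IsFactorInf u s) →
          Directs (fun n => (Δ n, decide (Δ n ≠ a))) t' → t' = t)) := by
  classical
  obtain ⟨b, hb⟩ : ∃ b, b ≠ a := Fintype.exists_ne_of_one_lt_card hcard a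
  have hneq : ∀ {Δ : ℕ → A}, (∀ b : A, ∀ N, ∃ n, N ≤ n ∧ Δ n = b) →
      ∀ N, ∃ n, N ≤ n ∧ Δ n ≠ a := fun h N => by
    obtain ⟨n, hn, e⟩ := h b N
    exact ⟨n, hn, by rw [e]; exact hb⟩
  have hchain : ∀ {Δ s}, IsEpistandardOf Δ s →
      ∃ ts, ts 0 = consInf a s ∧ Chain a Δ ts := fun {Δ s} hs =>
    ⟨_, by simp [hs.unique (stdWord_spec Δ)], chain_stdWord a Δ⟩
  refine ⟨⟨fun hL => ?_, ?_⟩, ?_⟩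
  · obtain ⟨Δ, ΔS, hS, hΔ, hd⟩ := ht
    obtain ⟨ts, h0, hc⟩ := hL.exists_chain ha ⟨b, hb⟩ hS hΔ hd
    have hts := hc.unique (hneq hΔ) (chain_stdWord a Δ)
    have hrec := hc.recurrent (hΔ a) (hneq hΔ) 0
    have e : t = consInf a (stdWord Δ) := by rw [← h0, hts]; simp
    refine ⟨Δ, stdWord Δ, stdWord_spec Δ, hΔ, ?_, e⟩
    rintro ⟨p, N, hp, hN⟩
    rw [h0] at hrec
    refine hL.not_ultimatelyPeriodic_tail hrec (N := N + 1) hp fun n hn => ?_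
    obtain ⟨n, rfl⟩ : ∃ n', n = n' + 1 := ⟨n - 1, by omega⟩
    rw [e, show n + 1 + p = n + p + 1 by omega]
    exact hN n (by omega)
  · rintro ⟨Δ, s, hs, hΔ, -, rfl⟩
    obtain ⟨ts, h0, hc⟩ := hchain hs
    rw [← h0]
    exact hc.infLyndon ha (hneq hΔ) 0
  · rintro Δ s hs hΔ - rfl
    obtain ⟨ts, h0, hc⟩ := hchain hs
    have hrec := hc.recurrent (hΔ a) (hneq hΔ) 0
    have hdir := hc.directs (hΔ a) (hneq hΔ)
    rw [h0] at hrec hdir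
    refine ⟨hdir, fun u => ⟨?_, ?_⟩, fun t' _ _ hd' => ?_⟩
    · rintro ⟨k, hk⟩
      -- By recurrence, a factor of `a s` also occurs past its first letter.
      obtain ⟨m, hm, hocc⟩ := hrec u k hk 1
      obtain ⟨m, rfl⟩ : ∃ m', m = m' + 1 := ⟨m - 1, by omega⟩
      refine ⟨m, fun i hi => ?_⟩
      rw [hocc i hi, show m + 1 + i = m + i + 1 by omega]
      rfl
    · rintro ⟨k, hk⟩
      refine ⟨k + 1, fun i hi => ?_⟩
      rw [hk i hi, show k + 1 + i = k + i + 1 by omega]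
      rfl
    · obtain ⟨ts', h0', hc'⟩ := chain_of_directs (hΔ a) hd'
      rw [← h0', ← h0, hc'.unique (hneq hΔ) hc]

end EpiQP
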